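/- (Clarkson inequality for Schatten classes, case 2 ≤ p < ∞.) Let 2 ≤ p < ∞ and q = p/(p−1). For all T₁, T₂ in the Schatten class S_p(H) one has (‖T₁ + T₂‖_p^p + ‖T₁ − T₂‖_p^p)^{1/p} ≤ 2^{1/p} (‖T₁‖_p^q + ‖T₂‖_p^q)^{1/q}. -/

import Mathlib

open scoped InnerProductSpace ENNReal Topology
open Filter

/-- An Orlicz function (N-function): convex, nondecreasing and continuous on `[0, ∞)`,
vanishing at `0`, positive on `(0, ∞)` and tending to `∞` at `∞`. -/
structure OrliczFunction : Type where
  toFun : ℝ → ℝ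
  convexOn : ConvexOn ℝ (Set.Ici (0 : ℝ)) toFun
  monotoneOn : MonotoneOn toFun (Set.Ici (0 : ℝ))
  continuousOn : ContinuousOn toFun (Set.Ici (0 : ℝ))
  map_zero : toFun 0 = 0
  pos : ∀ x : ℝ, 0 < x → 0 < toFun x
  tendsto_atTop : Filter.Tendsto toFun Filter.atTop Filter.atTop

/-- `ψ` is the complementary N-function of `φ`: `ψ(y) = sup {x·y − φ(x) : x ≥ 0}`. -/
def OrliczFunction.IsComplementary (φ ψ : OrliczFunction) : Prop :=
  ∀ y : ℝ, 0 ≤ y → ψ.toFun y = sSup {v : ℝ | ∃ x : ℝ, 0 ≤ x ∧ v = x * y - φ.toFun x}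

/-- `g` is the (two-sided) inverse of `f` on `[0, ∞)`, taking nonnegative values. -/
def IsOrliczInverse (g f : ℝ → ℝ) : Prop :=
  (∀ u : ℝ, 0 ≤ u → 0 ≤ g u) ∧ (∀ u : ℝ, 0 ≤ u → f (g u) = u) ∧
    ∀ u : ℝ, 0 ≤ u → g (f u) = u

variable {H : Type} [NormedAddCommGroup H] [InnerProductSpace ℂ H] [CompleteSpace H]

/-- The `n`-th singular value of an operator `T` (indexed from `n = 0`), described as the
`n`-th approximation number: the distance from `T` to the operators of rank `≤ n`.  For a
compact operator on a Hilbert space this is exactly the `(n+1)`-st eigenvalue of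
`|T| = (T*T)^(1/2)` in decreasing order. -/
noncomputable def sValue (T : H →L[ℂ] H) (n : ℕ) : ℝ :=
  sInf {c : ℝ | ∃ F : H →L[ℂ] H,
    Module.rank ℂ (LinearMap.range F.toLinearMap) ≤ (n : Cardinal) ∧ c = ‖T - F‖}

/-- `tr(φ(|T|)) = Σ_n φ(s_n(T))`. -/
noncomputable def orliczSum (φ : OrliczFunction) (T : H →L[ℂ] H) : ℝ :=
  ∑' n : ℕ, φ.toFun (sValue T n)

/-- Membership in the noncommutative Orlicz sequence space `S_φ(H)`:
`T` is compact and `Σ_n φ(λ s_n(T)) < ∞` for some `λ > 0`. -/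
def MemS (φ : OrliczFunction) (T : H →L[ℂ] H) : Prop :=
  IsCompactOperator (⇑T) ∧
    ∃ l : ℝ, 0 < l ∧ Summable fun n : ℕ => φ.toFun (l * sValue T n)

/-- The Luxemburg norm `‖T‖_(φ) = inf {λ > 0 : Σ_n φ(s_n(T)/λ) ≤ 1}`. -/
noncomputable def luxNorm (φ : OrliczFunction) (T : H →L[ℂ] H) : ℝ :=
  sInf {l : ℝ | 0 < l ∧ (Summable fun n : ℕ => φ.toFun (sValue T n / l)) ∧
    ∑' n : ℕ, φ.toFun (sValue T n / l) ≤ 1}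

/-- The Orlicz norm `‖T‖_φ = sup {tr |TB| : tr(ψ(B)) ≤ 1}`, expressed through the
complementary function `ψ` of `φ` (here `tr|TB| = Σ_n s_n(TB)`). -/
noncomputable def orlNormVia (ψ : OrliczFunction) (T : H →L[ℂ] H) : ℝ :=
  sSup {c : ℝ | ∃ B : H →L[ℂ] H, IsCompactOperator (⇑B) ∧
    (Summable fun n : ℕ => ψ.toFun (sValue B n)) ∧
    (∑' n : ℕ, ψ.toFun (sValue B n)) ≤ 1 ∧ c = ∑' n : ℕ, sValue (T ∘L B) n}

/-- The norm `‖T‖_((φ),p) = (‖T₁‖_(φ₁)^p + ‖T₂‖_(φ₂)^p)^(1/p)` on 2-tuples. -/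
noncomputable def luxNorm2 (φ₁ φ₂ : OrliczFunction) (p : ℝ) (T₁ T₂ : H →L[ℂ] H) : ℝ :=
  (luxNorm φ₁ T₁ ^ p + luxNorm φ₂ T₂ ^ p) ^ (1 / p)

/-- The Orlicz-type norm `‖T‖_(φ,p) = (‖T₁‖_φ₁^p + ‖T₂‖_φ₂^p)^(1/p)` on 2-tuples,
where the Orlicz norms are computed via the complementary functions `ψ₁, ψ₂`. -/
noncomputable def orlNorm2 (ψ₁ ψ₂ : OrliczFunction) (p : ℝ) (T₁ T₂ : H →L[ℂ] H) : ℝ :=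
  (orlNormVia ψ₁ T₁ ^ p + orlNormVia ψ₂ T₂ ^ p) ^ (1 / p)

/-- 2-tuple Luxemburg norm for an exponent `r ∈ [1, ∞]`. -/
noncomputable def luxNorm2E (φ₁ φ₂ : OrliczFunction) (r : ℝ≥0∞) (T₁ T₂ : H →L[ℂ] H) : ℝ :=
  if r = ⊤ then max (luxNorm φ₁ T₁) (luxNorm φ₂ T₂)
  else (luxNorm φ₁ T₁ ^ r.toReal + luxNorm φ₂ T₂ ^ r.toReal) ^ (1 / r.toReal)

/-- The trace of an operator, computed along a Hilbert basis. -/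
noncomputable def traceAlong {ι : Type} (b : HilbertBasis ι ℂ H) (T : H →L[ℂ] H) : ℂ :=
  ∑' i : ι, ⟪b i, T (b i)⟫_ℂ

/-- The Schatten `p`-norm `‖T‖_p = (Σ_n s_n(T)^p)^(1/p)`. -/
noncomputable def schattenNorm (p : ℝ) (T : H →L[ℂ] H) : ℝ :=
  (∑' n : ℕ, sValue T n ^ p) ^ (1 / p)

/-- Membership in the Schatten class `S_p(H)`. -/
def MemSp (p : ℝ) (T : H →L[ℂ] H) : Prop :=
  IsCompactOperator (⇑T) ∧ Summable fun n : ℕ => sValue T n ^ p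

/-- The nonsquare constant `J` of the noncommutative Orlicz space `S_φ(H)`
(with the Luxemburg norm). -/
noncomputable def JOrlicz (φ : OrliczFunction) : ℝ :=
  sSup {c : ℝ | ∃ T B : H →L[ℂ] H, MemS φ T ∧ MemS φ B ∧
    luxNorm φ T = 1 ∧ luxNorm φ B = 1 ∧
    c = min (luxNorm φ (T + B)) (luxNorm φ (T - B))}

/-- The von Neumann–Jordan constant of `S_φ(H)` (with the Luxemburg norm): the smallest
`c > 0` such that `1/c ≤ (‖x+y‖² + ‖x−y‖²)/(2(‖x‖² + ‖y‖²)) ≤ c` for all `x, y` in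
`S_φ(H)` not both zero. -/
noncomputable def cNJOrlicz (φ : OrliczFunction) : ℝ :=
  sInf {c : ℝ | 0 < c ∧ ∀ T B : H →L[ℂ] H, MemS φ T → MemS φ B → ¬(T = 0 ∧ B = 0) →
    1 / c ≤ (luxNorm φ (T + B) ^ 2 + luxNorm φ (T - B) ^ 2) /
        (2 * (luxNorm φ T ^ 2 + luxNorm φ B ^ 2)) ∧
      (luxNorm φ (T + B) ^ 2 + luxNorm φ (T - B) ^ 2) /
        (2 * (luxNorm φ T ^ 2 + luxNorm φ B ^ 2)) ≤ c}

/-- The von Neumann–Jordan constant of the Schatten class `S_p(H)`. -/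
noncomputable def cNJSchatten (p : ℝ) : ℝ :=
  sInf {c : ℝ | 0 < c ∧ ∀ T B : H →L[ℂ] H, MemSp p T → MemSp p B → ¬(T = 0 ∧ B = 0) →
    1 / c ≤ (schattenNorm p (T + B) ^ 2 + schattenNorm p (T - B) ^ 2) /
        (2 * (schattenNorm p T ^ 2 + schattenNorm p B ^ 2)) ∧
      (schattenNorm p (T + B) ^ 2 + schattenNorm p (T - B) ^ 2) /
        (2 * (schattenNorm p T ^ 2 + schattenNorm p B ^ 2)) ≤ c}


/-!
The map `(A, B) ↦ (A + B, A - B)` has norm `1` from `ℓ¹(S_∞)` to `ℓ^∞(S_∞)` by the triangle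
inequality, and norm `√2` from `ℓ²(S_2)` to `ℓ²(S_2)` by the parallelogram law. Riesz–Thorin
interpolation at `θ = 2 / p` gives norm `2 ^ (1 / p)` from `ℓ^q(S_p)` to `ℓ^p(S_p)`.

In finite dimension the interpolation reduces to scalar sequences: freezing the singular bases of
`A`, `B`, `A + B` and `A - B` turns the map into one between coefficient sequences, which still
satisfies both endpoint bounds and carries the singular values of `A`, `B` to those of `A ± B`.
In general, compressing to finite-dimensional subspaces decreases singular values, and the
compressed singular values converge to the original ones as the subspaces grow.
-/

section RieszThorin

/-- The phase-preserving power `c |c|^(w-1)`, an entire function of `w` that vanishes identically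
when `c = 0`. -/
noncomputable def phasePow (c w : ℂ) : ℂ :=
  c * Complex.exp ((w - 1) * Real.log ‖c‖)

lemma differentiable_phasePow (c : ℂ) : Differentiable ℂ (phasePow c) := by
  unfold phasePow
  fun_prop

lemma norm_phasePow_le (c w : ℂ) : ‖phasePow c w‖ ≤ ‖c‖ ^ w.re := by
  rcases eq_or_ne c 0 with rfl | hc
  · simpa [phasePow] using Real.rpow_nonneg le_rfl w.re
  · have hc' : 0 < ‖c‖ := norm_pos_iff.2 hc
    have hexp : ‖Complex.exp ((w - 1) * Real.log ‖c‖)‖ = ‖c‖ ^ (w.re - 1) := by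
      rw [Complex.norm_exp, Real.rpow_def_of_pos hc', Complex.re_mul_ofReal, Complex.sub_re,
        Complex.one_re, mul_comm]
    rw [phasePow, norm_mul, hexp, Real.rpow_sub_one hc'.ne', mul_div_cancel₀ _ hc'.ne']

lemma phasePow_one (c : ℂ) : phasePow c 1 = c := by
  simp [phasePow]

lemma phasePow_conj_mul (c : ℂ) {r : ℝ} (hr : r ≠ 0) :
    phasePow (starRingEnd ℂ c) ((r - 1 : ℝ) : ℂ) * c = ((‖c‖ ^ r : ℝ) : ℂ) := by
  rcases eq_or_ne c 0 with rfl | hc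
  · simp [Real.zero_rpow hr]
  · have hc' : 0 < ‖c‖ := norm_pos_iff.2 hc
    have hexp : Complex.exp ((((r - 1 : ℝ) : ℂ) - 1) * Real.log ‖c‖) =
        ((‖c‖ ^ (r - 2) : ℝ) : ℂ) := by
      rw [Real.rpow_def_of_pos hc', Complex.ofReal_exp]
      congr 1
      push_cast
      ring
    rw [phasePow, RCLike.norm_conj, hexp, mul_right_comm, Complex.conj_mul', ← Complex.ofReal_pow,
      ← Complex.ofReal_mul, ← Real.rpow_natCast, ← Real.rpow_add hc']
    congr 2
    push_cast
    ring

/-- The `ℓ^p` norm of a finite family, written with a real exponent `p` so as to match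
`schattenNorm`. -/
noncomputable def finLpNorm {ι E : Type*} [Fintype ι] [NormedAddCommGroup E] (p : ℝ)
    (a : ι → E) : ℝ :=
  (∑ i, ‖a i‖ ^ p) ^ (1 / p)

section finLpNorm

variable {ι E : Type*} [Fintype ι] [NormedAddCommGroup E] (a : ι → E) {p : ℝ}

lemma finLpNorm_nonneg : 0 ≤ finLpNorm p a := by
  unfold finLpNorm
  positivity

lemma finLpNorm_rpow (hp : p ≠ 0) : finLpNorm p a ^ p = ∑ i, ‖a i‖ ^ p := by
  rw [finLpNorm, ← Real.rpow_mul (by positivity), one_div_mul_cancel hp, Real.rpow_one]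

lemma norm_le_finLpNorm (hp : 0 < p) (i : ι) : ‖a i‖ ≤ finLpNorm p a := by
  rw [← Real.rpow_le_rpow_iff (norm_nonneg _) (finLpNorm_nonneg a) hp, finLpNorm_rpow a hp.ne']
  exact Finset.single_le_sum (f := fun i => ‖a i‖ ^ p) (fun _ _ => by positivity)
    (Finset.mem_univ i)

end finLpNorm

section DualFamily

/-- The analytic family through the functional norming `c` in `ℓ^p`: up to scaling it lies in the
unit ball of `ℓ¹` on the line `re z = 0` and of `ℓ²` on the line `re z = 1`. -/
noncomputable def dualFamily {κ : Type*} (p : ℝ) (c : κ → ℂ) (z : ℂ) (k : κ) : ℂ :=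
  phasePow (starRingEnd ℂ (c k)) (p * (1 - z / 2))

variable {κ : Type*} (p : ℝ) (c : κ → ℂ) {z : ℂ}

lemma differentiable_dualFamily (k : κ) : Differentiable ℂ fun z => dualFamily p c z k :=
  (differentiable_phasePow _).comp (by fun_prop)

lemma norm_dualFamily_le (z : ℂ) (k : κ) :
    ‖dualFamily p c z k‖ ≤ ‖c k‖ ^ (p * (1 - z.re / 2)) := by
  simpa [dualFamily] using norm_phasePow_le (starRingEnd ℂ (c k)) (p * (1 - z / 2))

lemma dualFamily_two_div_mul {p : ℝ} (hp : p ≠ 0) (k : κ) :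
    dualFamily p c ((2 / p : ℝ) : ℂ) k * c k = ((‖c k‖ ^ p : ℝ) : ℂ) := by
  have hexponent : (p : ℂ) * (1 - ((2 / p : ℝ) : ℂ) / 2) = ((p - 1 : ℝ) : ℂ) := by
    have : (p : ℂ) ≠ 0 := by exact_mod_cast hp
    push_cast
    field_simp
  rw [dualFamily, hexponent, phasePow_conj_mul _ hp]

lemma norm_sq_dualFamily_le (hz : z.re = 1) (k : κ) : ‖dualFamily p c z k‖ ^ 2 ≤ ‖c k‖ ^ p := by
  calc ‖dualFamily p c z k‖ ^ 2 ≤ (‖c k‖ ^ (p * (1 - z.re / 2))) ^ 2 := by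
        gcongr
        exact norm_dualFamily_le p c z k
    _ = ‖c k‖ ^ p := by
        rw [← Real.rpow_mul_natCast (norm_nonneg _), hz]
        congr 1
        push_cast
        ring

end DualFamily

section InterpolatingFamily

/-- The analytic family through `a ∈ ℓ^p` at `z = 2 / p`: its `ℓ^∞` norm on the line `re z = 0`
and its squared `ℓ²` norm on the line `re z = 1` are at most `‖a‖_p ^ q`. -/
noncomputable def interpFamily {ι : Type*} [Fintype ι] (p q : ℝ) (a : ι → ℂ) (z : ℂ) (i : ι) : ℂ :=
  phasePow (finLpNorm p a) (q * (1 - z / 2)) * phasePow (a i / finLpNorm p a) (p * z / 2)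

variable {ι : Type*} [Fintype ι] {p : ℝ} (q : ℝ) (a : ι → ℂ) {z : ℂ}

lemma differentiable_interpFamily (p : ℝ) : Differentiable ℂ (interpFamily p q a) :=
  differentiable_pi.2 fun _ =>
    ((differentiable_phasePow _).comp (by fun_prop)).mul
      ((differentiable_phasePow _).comp (by fun_prop))

lemma interpFamily_two_div {q : ℝ} (hpq : p.HolderConjugate q) :
    interpFamily p q a ((2 / p : ℝ) : ℂ) = a := by
  have hp : (p : ℂ) ≠ 0 := by exact_mod_cast hpq.ne_zero
  have hscale : (q : ℂ) * (1 - ((2 / p : ℝ) : ℂ) / 2) = 1 := by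
    have : (p * q : ℂ) = p + q := by exact_mod_cast hpq.mul_eq_add
    push_cast
    field_simp
    linear_combination this
  have hshape : (p : ℂ) * ((2 / p : ℝ) : ℂ) / 2 = 1 := by
    push_cast
    field_simp
  ext i
  rw [interpFamily, hscale, hshape, phasePow_one, phasePow_one]
  rcases eq_or_ne (finLpNorm p a) 0 with h | h
  · have : a i = 0 := norm_le_zero_iff.1 (h ▸ norm_le_finLpNorm a hpq.pos i)
    simp [this]
  · exact mul_div_cancel₀ _ (by exact_mod_cast h)

lemma norm_interpFamily_apply_le (p : ℝ) (z : ℂ) (i : ι) : ‖interpFamily p q a z i‖ ≤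
    finLpNorm p a ^ (q * (1 - z.re / 2)) * (‖a i‖ / finLpNorm p a) ^ (p * z.re / 2) := by
  have h₁ := norm_phasePow_le (finLpNorm p a) (q * (1 - z / 2))
  have h₂ := norm_phasePow_le (a i / finLpNorm p a) (p * z / 2)
  rw [interpFamily, norm_mul]
  have hN := finLpNorm_nonneg (p := p) a
  gcongr
  · simpa [abs_of_nonneg hN] using h₁
  · simpa [abs_of_nonneg hN] using h₂

lemma norm_interpFamily_le (hp : 0 < p) (hz : 0 ≤ z.re) :
    ‖interpFamily p q a z‖ ≤ finLpNorm p a ^ (q * (1 - z.re / 2)) := by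
  have hN := finLpNorm_nonneg (p := p) a
  refine (pi_norm_le_iff_of_nonneg (by positivity)).2 fun i =>
    (norm_interpFamily_apply_le q a p z i).trans (mul_le_of_le_one_right (by positivity) ?_)
  exact Real.rpow_le_one (by positivity) (div_le_one_of_le₀ (norm_le_finLpNorm a hp i) hN)
    (by positivity)

lemma sum_sq_norm_interpFamily_le (hp : p ≠ 0) (hz : z.re = 1) :
    ∑ i, ‖interpFamily p q a z i‖ ^ 2 ≤ finLpNorm p a ^ q := by
  set N := finLpNorm p a with hN
  have hN0 : 0 ≤ N := finLpNorm_nonneg a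
  have hterm : ∀ i, ‖interpFamily p q a z i‖ ^ 2 ≤ N ^ q * (‖a i‖ ^ p / N ^ p) := fun i =>
    calc ‖interpFamily p q a z i‖ ^ 2
        ≤ (N ^ (q * (1 - z.re / 2)) * (‖a i‖ / N) ^ (p * z.re / 2)) ^ 2 := by
          gcongr
          exact norm_interpFamily_apply_le q a p z i
      _ = N ^ q * (‖a i‖ / N) ^ p := by
          rw [mul_pow, ← Real.rpow_mul_natCast hN0, ← Real.rpow_mul_natCast (by positivity), hz]
          congr 2 <;> push_cast <;> ring
      _ = N ^ q * (‖a i‖ ^ p / N ^ p) := by rw [Real.div_rpow (norm_nonneg _) hN0]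
  calc ∑ i, ‖interpFamily p q a z i‖ ^ 2
      ≤ ∑ i, N ^ q * (‖a i‖ ^ p / N ^ p) := Finset.sum_le_sum fun i _ => hterm i
    _ = N ^ q * (N ^ p / N ^ p) := by
        rw [← Finset.mul_sum, ← Finset.sum_div, hN, finLpNorm_rpow a hp]
    _ ≤ N ^ q := mul_le_of_le_one_right (by positivity) (div_self_le_one _)

end InterpolatingFamily

section Pairing

/-- The analytic pairing to which the three lines theorem is applied; at `z = 2 / p` it equals
`∑ k, |L a k| ^ p`. -/
noncomputable def interpPairing {J ι κ : Type*} [Fintype ι] [Fintype κ] (p q : ℝ)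
    (L : (J → ι → ℂ) →ₗ[ℂ] κ → ℂ) (a : J → ι → ℂ) (z : ℂ) : ℂ :=
  ∑ k, dualFamily p (L a) z k * L (fun j => interpFamily p q (a j) z) k

variable {J ι κ : Type*} [Fintype ι] [Fintype κ] {p q : ℝ}
  (L : (J → ι → ℂ) →ₗ[ℂ] κ → ℂ) (a : J → ι → ℂ) {M : ℝ} {z : ℂ}

lemma differentiable_interpPairing [Finite J] (p q : ℝ) :
    Differentiable ℂ (interpPairing p q L a) := by
  have := Fintype.ofFinite J
  have hL : Differentiable ℂ fun z => L fun j => interpFamily p q (a j) z :=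
    L.toContinuousLinearMap.differentiable.comp
      (differentiable_pi.2 fun j => differentiable_interpFamily q (a j) p)
  exact .fun_sum fun k _ =>
    (differentiable_dualFamily p (L a) k).mul (differentiable_pi.1 hL k)

lemma interpPairing_two_div (hpq : p.HolderConjugate q) :
    interpPairing p q L a ((2 / p : ℝ) : ℂ) = ((finLpNorm p (L a) ^ p : ℝ) : ℂ) := by
  simp only [interpPairing, interpFamily_two_div _ hpq, finLpNorm_rpow _ hpq.ne_zero,
    dualFamily_two_div_mul _ hpq.ne_zero, Complex.ofReal_sum]

variable [Fintype J]

lemma norm_interpPairing_le (h : ∀ a, ‖L a‖ ≤ M * ∑ j, ‖a j‖) (z : ℂ) :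
    ‖interpPairing p q L a z‖ ≤
      (∑ k, ‖dualFamily p (L a) z k‖) * (M * ∑ j, ‖interpFamily p q (a j) z‖) := by
  rw [interpPairing, Finset.sum_mul]
  refine (norm_sum_le _ _).trans (Finset.sum_le_sum fun k _ => ?_)
  rw [norm_mul]
  gcongr
  exact (norm_le_pi_norm _ k).trans (h _)

lemma sum_finLpNorm_rpow (hq : q ≠ 0) :
    ∑ j, finLpNorm p (a j) ^ q = finLpNorm q (fun j => finLpNorm p (a j)) ^ q := by
  rw [finLpNorm_rpow _ hq]
  simp only [Real.norm_of_nonneg (finLpNorm_nonneg _)]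

lemma norm_interpPairing_le_of_re_eq_zero (hM : 0 ≤ M) (h : ∀ a, ‖L a‖ ≤ M * ∑ j, ‖a j‖)
    (hp : 0 < p) (hq : q ≠ 0) (hz : z.re = 0) :
    ‖interpPairing p q L a z‖ ≤
      finLpNorm p (L a) ^ p * (M * finLpNorm q (fun j => finLpNorm p (a j)) ^ q) := by
  refine (norm_interpPairing_le L a h z).trans ?_
  rw [finLpNorm_rpow _ hp.ne', ← sum_finLpNorm_rpow a hq]
  gcongr with k _ j
  · simpa [hz] using norm_dualFamily_le p (L a) z k
  · simpa [hz] using norm_interpFamily_le q (a j) hp hz.ge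

lemma norm_interpPairing_le_of_re_eq_one (hM : 0 ≤ M)
    (h : ∀ a, ∑ k, ‖L a k‖ ^ 2 ≤ M ^ 2 * ∑ j, ∑ i, ‖a j i‖ ^ 2) (hp : p ≠ 0) (hq : q ≠ 0)
    (hz : z.re = 1) :
    ‖interpPairing p q L a z‖ ≤
      √(finLpNorm p (L a) ^ p) * (M * √(finLpNorm q (fun j => finLpNorm p (a j)) ^ q)) := by
  set b : J → ι → ℂ := fun j => interpFamily p q (a j) z
  calc ‖interpPairing p q L a z‖ ≤ ∑ k, ‖dualFamily p (L a) z k‖ * ‖L b k‖ :=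
        (norm_sum_le _ _).trans_eq (Finset.sum_congr rfl fun k _ => norm_mul _ _)
    _ ≤ √(∑ k, ‖dualFamily p (L a) z k‖ ^ 2) * √(∑ k, ‖L b k‖ ^ 2) :=
        Real.sum_mul_le_sqrt_mul_sqrt _ _ _
    _ ≤ √(∑ k, ‖L a k‖ ^ p) * √(M ^ 2 * ∑ j, finLpNorm p (a j) ^ q) := by
        gcongr with k
        · exact norm_sq_dualFamily_le p (L a) hz k
        · refine (h b).trans ?_
          gcongr with j
          exact sum_sq_norm_interpFamily_le q (a j) hp hz
    _ = _ := by
        rw [finLpNorm_rpow _ hp, sum_finLpNorm_rpow a hq, Real.sqrt_mul (sq_nonneg M),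
          Real.sqrt_sq hM]

lemma rpow_le_max_one_rpow {x r s : ℝ} (hx : 0 ≤ x) (hr : 0 ≤ r) (hrs : r ≤ s) :
    x ^ r ≤ max 1 x ^ s :=
  (Real.rpow_le_rpow hx (le_max_right 1 x) hr).trans
    (Real.rpow_le_rpow_of_exponent_le (le_max_left 1 x) hrs)

lemma bddAbove_norm_interpPairing (hM : 0 ≤ M) (h : ∀ a, ‖L a‖ ≤ M * ∑ j, ‖a j‖)
    (hp : 0 < p) (hq : 0 ≤ q) :
    BddAbove ((norm ∘ interpPairing p q L a) '' Complex.HadamardThreeLines.verticalClosedStrip 0 1)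
    := by
  refine ⟨(∑ k, max 1 ‖L a k‖ ^ p) * (M * ∑ j, max 1 (finLpNorm p (a j)) ^ q), ?_⟩
  rintro _ ⟨z, ⟨hz₀, hz₁⟩, rfl⟩
  refine (norm_interpPairing_le L a h z).trans ?_
  gcongr with k _ j
  · refine (norm_dualFamily_le p (L a) z k).trans
      (rpow_le_max_one_rpow (norm_nonneg _) ?_ ?_) <;> nlinarith
  · refine (norm_interpFamily_le q (a j) hp hz₀).trans
      (rpow_le_max_one_rpow (finLpNorm_nonneg _) ?_ ?_) <;> nlinarith

end Pairing

lemma le_of_rpow_le_interp {p q s m M₀ M₁ : ℝ} (hp : 2 ≤ p) (hpq : p.HolderConjugate q)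
    (hs : 0 ≤ s) (hm : 0 ≤ m) (hM₀ : 0 ≤ M₀) (hM₁ : 0 ≤ M₁)
    (h : s ^ p ≤ (s ^ p * (M₀ * m ^ q)) ^ (1 - 2 / p) * (√(s ^ p) * (M₁ * √(m ^ q))) ^ (2 / p)) :
    s ≤ M₀ ^ (1 - 2 / p) * M₁ ^ (2 / p) * m := by
  rcases hs.eq_or_lt with rfl | hs'
  · positivity
  have hp₀ : 0 < p := hpq.pos
  have hθ : 0 ≤ 1 - 2 / p := by
    rw [sub_nonneg, div_le_one hp₀]
    exact hp
  have hq₀ : 0 < q := hpq.symm.pos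
  have hfactor : ∀ {x r : ℝ}, 0 ≤ x → 0 ≤ r →
      (x ^ r) ^ (1 - 2 / p) * √(x ^ r) ^ (2 / p) = x ^ (r * (1 - 1 / p)) := by
    intro x r hx hr
    rw [Real.sqrt_eq_rpow, ← Real.rpow_mul hx, ← Real.rpow_mul hx, ← Real.rpow_mul hx,
      ← Real.rpow_add_of_nonneg hx (by positivity) (by positivity)]
    congr 1
    field_simp
    ring
  have hmexp : q * (1 - 1 / p) = 1 := by
    rw [one_div, hpq.one_sub_inv, mul_inv_cancel₀ hq₀.ne']
  have hsexp : s ^ (p * (1 - 1 / p)) * s = s ^ p := by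
    rw [mul_sub, mul_one, mul_one_div_cancel hp₀.ne', ← Real.rpow_add_one hs'.ne', sub_add_cancel]
  refine le_of_mul_le_mul_left ?_ (Real.rpow_pos_of_pos hs' (p * (1 - 1 / p)))
  calc s ^ (p * (1 - 1 / p)) * s = s ^ p := hsexp
    _ ≤ (s ^ p * (M₀ * m ^ q)) ^ (1 - 2 / p) * (√(s ^ p) * (M₁ * √(m ^ q))) ^ (2 / p) := h
    _ = ((s ^ p) ^ (1 - 2 / p) * √(s ^ p) ^ (2 / p)) * (M₀ ^ (1 - 2 / p) * M₁ ^ (2 / p) *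
          ((m ^ q) ^ (1 - 2 / p) * √(m ^ q) ^ (2 / p))) := by
        rw [Real.mul_rpow (by positivity) (by positivity), Real.mul_rpow hM₀ (by positivity),
          Real.mul_rpow (by positivity) (by positivity), Real.mul_rpow hM₁ (by positivity)]
        ring
    _ = s ^ (p * (1 - 1 / p)) * (M₀ ^ (1 - 2 / p) * M₁ ^ (2 / p) * m) := by
        rw [hfactor hs hp₀.le, hfactor hm hq₀.le, hmexp, Real.rpow_one]

theorem finLpNorm_le_of_interpolation {J ι κ : Type*} [Fintype J] [Fintype ι] [Fintype κ]
    (L : (J → ι → ℂ) →ₗ[ℂ] κ → ℂ) {M₀ M₁ : ℝ} (hM₀ : 0 ≤ M₀) (hM₁ : 0 ≤ M₁)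
    (h₀ : ∀ a, ‖L a‖ ≤ M₀ * ∑ j, ‖a j‖)
    (h₁ : ∀ a, ∑ k, ‖L a k‖ ^ 2 ≤ M₁ ^ 2 * ∑ j, ∑ i, ‖a j i‖ ^ 2)
    {p q : ℝ} (hp : 2 ≤ p) (hpq : p.HolderConjugate q) (a : J → ι → ℂ) :
    finLpNorm p (L a) ≤
      M₀ ^ (1 - 2 / p) * M₁ ^ (2 / p) * finLpNorm q (fun j => finLpNorm p (a j)) := by
  have hmem : ((2 / p : ℝ) : ℂ) ∈ Complex.HadamardThreeLines.verticalClosedStrip 0 1 := by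
    refine ⟨?_, ?_⟩ <;> rw [Complex.ofReal_re]
    · exact div_nonneg zero_le_two hpq.nonneg
    · exact (div_le_one hpq.pos).2 hp
  have hthree := Complex.HadamardThreeLines.norm_le_interp_of_mem_verticalClosedStrip₀₁' _ hmem
    (differentiable_interpPairing L a p q).diffContOnCl
    (bddAbove_norm_interpPairing L a hM₀ h₀ hpq.pos hpq.symm.nonneg)
    (fun _ hz => norm_interpPairing_le_of_re_eq_zero L a hM₀ h₀ hpq.pos hpq.symm.ne_zero hz)
    (fun _ hz => norm_interpPairing_le_of_re_eq_one L a hM₁ h₁ hpq.ne_zero hpq.symm.ne_zero hz)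
  rw [interpPairing_two_div L a hpq, Complex.ofReal_re, Complex.norm_real,
    Real.norm_of_nonneg (Real.rpow_nonneg (finLpNorm_nonneg _) p)] at hthree
  exact le_of_rpow_le_interp hp hpq (finLpNorm_nonneg _) (finLpNorm_nonneg _) hM₀ hM₁ hthree

end RieszThorin

section ApproximationNumbers

variable {E K : Type} [NormedAddCommGroup E] [InnerProductSpace ℂ E]
  [NormedAddCommGroup K] [InnerProductSpace ℂ K] {T : E →L[ℂ] E} {n : ℕ}

lemma sValue_le_norm_sub (T F : E →L[ℂ] E)
    (hF : Module.rank ℂ (LinearMap.range F.toLinearMap) ≤ (n : Cardinal)) :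
    sValue T n ≤ ‖T - F‖ :=
  csInf_le ⟨0, by rintro _ ⟨F, -, rfl⟩; exact norm_nonneg _⟩ ⟨F, hF, rfl⟩

lemma exists_norm_sub_lt_of_sValue_lt {c : ℝ} (h : sValue T n < c) :
    ∃ F : E →L[ℂ] E, Module.rank ℂ (LinearMap.range F.toLinearMap) ≤ (n : Cardinal) ∧
      ‖T - F‖ < c := by
  obtain ⟨_, ⟨F, hF, rfl⟩, hlt⟩ := exists_lt_of_csInf_lt (by exact ⟨_, 0, by simp, rfl⟩) h
  exact ⟨F, hF, hlt⟩

lemma le_sValue {c : ℝ} (h : ∀ F : E →L[ℂ] E,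
    Module.rank ℂ (LinearMap.range F.toLinearMap) ≤ (n : Cardinal) → c ≤ ‖T - F‖) :
    c ≤ sValue T n := by
  by_contra! hlt
  obtain ⟨F, hF, hF'⟩ := exists_norm_sub_lt_of_sValue_lt hlt
  exact (h F hF).not_gt hF'

lemma sValue_nonneg (T : E →L[ℂ] E) (n : ℕ) : 0 ≤ sValue T n :=
  le_sValue fun _ _ => norm_nonneg _

lemma sValue_rpow_nonneg (T : E →L[ℂ] E) (n : ℕ) (p : ℝ) : 0 ≤ sValue T n ^ p :=
  Real.rpow_nonneg (sValue_nonneg T n) p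

lemma sValue_eq_zero_of_rank_range_le
    (h : Module.rank ℂ (LinearMap.range T.toLinearMap) ≤ (n : Cardinal)) : sValue T n = 0 :=
  le_antisymm (by simpa using sValue_le_norm_sub T T h) (sValue_nonneg T n)

lemma lipschitzWith_sValue (n : ℕ) : LipschitzWith 1 fun T : E →L[ℂ] E => sValue T n := by
  refine LipschitzWith.of_le_add fun S T => ?_
  rw [← sub_le_iff_le_add]
  refine le_sValue fun F hF => ?_
  rw [sub_le_iff_le_add', dist_eq_norm]
  exact (sValue_le_norm_sub S F hF).trans (norm_sub_le_norm_sub_add_norm_sub S T F)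

lemma sValue_comp_comp_le (X : E →L[ℂ] K) (T : E →L[ℂ] E) (Y : K →L[ℂ] E) (n : ℕ) :
    sValue (X ∘L T ∘L Y) n ≤ ‖X‖ * ‖Y‖ * sValue T n := by
  have hle : ∀ F : E →L[ℂ] E, Module.rank ℂ (LinearMap.range F.toLinearMap) ≤ (n : Cardinal) →
      sValue (X ∘L T ∘L Y) n ≤ ‖X‖ * ‖Y‖ * ‖T - F‖ := fun F hF =>
    calc sValue (X ∘L T ∘L Y) n ≤ ‖X ∘L T ∘L Y - X ∘L F ∘L Y‖ :=
          sValue_le_norm_sub _ _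
            ((LinearMap.rank_comp_le_right (F ∘L Y).toLinearMap X.toLinearMap).trans
              ((LinearMap.rank_comp_le_left Y.toLinearMap F.toLinearMap).trans hF))
      _ = ‖X ∘L (T - F) ∘L Y‖ := by
          rw [ContinuousLinearMap.sub_comp, ContinuousLinearMap.comp_sub]
      _ ≤ ‖X‖ * (‖T - F‖ * ‖Y‖) :=
          (X.opNorm_comp_le _).trans (by gcongr; exact (T - F).opNorm_comp_le Y)
      _ = ‖X‖ * ‖Y‖ * ‖T - F‖ := by ring
  have hXY : 0 ≤ ‖X‖ * ‖Y‖ := by positivity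
  rcases hXY.eq_or_lt with h | h
  · simpa [← h] using hle 0 (by simp)
  · rw [← div_le_iff₀' h]
    exact le_sValue fun F hF => (div_le_iff₀' h).2 (hle F hF)

end ApproximationNumbers

section FiniteDimensional

variable {W : Type*} [NormedAddCommGroup W] [InnerProductSpace ℂ W] {ι : Type*} [Fintype ι]

/-- The operator `∑ j, a j ⟨v j, ·⟩ u j`, as a linear function of its coefficients `a`; the
singular value decomposition writes every operator in finite dimension in this form. -/
noncomputable def diagOp (u v : OrthonormalBasis ι ℂ W) : (ι → ℂ) →ₗ[ℂ] W →L[ℂ] W :=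
  Fintype.linearCombination ℂ fun j => InnerProductSpace.rankOne ℂ (u j) (v j)

/-- The diagonal matrix coefficients `⟨e k, X (f k)⟩` of an operator `X` with respect to two
orthonormal bases. -/
noncomputable def diagCoeff (e f : OrthonormalBasis ι ℂ W) : (W →L[ℂ] W) →ₗ[ℂ] ι → ℂ :=
  LinearMap.pi fun k =>
    (innerSL ℂ (e k)).toLinearMap ∘ₗ (ContinuousLinearMap.apply ℂ W (f k)).toLinearMap

variable (u v : OrthonormalBasis ι ℂ W) (a : ι → ℂ) (X : W →L[ℂ] W)

lemma diagOp_apply (x : W) : diagOp u v a x = ∑ j, (a j * ⟪v j, x⟫_ℂ) • u j := by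
  simp [diagOp, Fintype.linearCombination_apply, smul_smul]

lemma diagOp_apply_self (k : ι) : diagOp u v a (v k) = a k • u k := by
  classical
  simp [diagOp_apply, OrthonormalBasis.inner_eq_ite]

lemma eq_diagOp_of_forall_apply_eq {X : W →L[ℂ] W} {a : ι → ℂ}
    (h : ∀ j, X (v j) = a j • u j) : X = diagOp u v a := by
  have := v.toBasis.ext (f₁ := X.toLinearMap) (f₂ := (diagOp u v a).toLinearMap) fun j => by
    simp [h, diagOp_apply_self]
  exact ContinuousLinearMap.coe_injective this

lemma norm_sq_diagOp_apply (x : W) :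
    ‖diagOp u v a x‖ ^ 2 = ∑ j, ‖a j‖ ^ 2 * ‖⟪v j, x⟫_ℂ‖ ^ 2 := by
  rw [← u.sum_sq_norm_inner_right]
  refine Finset.sum_congr rfl fun k _ => ?_
  rw [diagOp_apply, u.orthonormal.inner_right_fintype, norm_mul, mul_pow]

lemma norm_diagOp_le : ‖diagOp u v a‖ ≤ ‖a‖ := by
  refine ContinuousLinearMap.opNorm_le_bound _ (norm_nonneg a) fun x => ?_
  refine le_of_sq_le_sq ?_ (by positivity)
  rw [norm_sq_diagOp_apply, mul_pow, ← v.sum_sq_norm_inner_right x, Finset.mul_sum]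
  gcongr with j
  exact norm_le_pi_norm a j

lemma norm_diagOp_apply_self (k : ι) : ‖diagOp u v a (v k)‖ = ‖a k‖ := by
  rw [diagOp_apply_self, norm_smul, u.norm_eq_one, mul_one]

lemma diagCoeff_apply (k : ι) : diagCoeff u v X k = ⟪u k, X (v k)⟫_ℂ := rfl

lemma diagCoeff_diagOp : diagCoeff u v (diagOp u v a) = a := by
  ext k
  rw [diagCoeff_apply, diagOp_apply_self, inner_smul_right, inner_self_eq_norm_sq_to_K,
    u.norm_eq_one]
  simp

lemma norm_diagCoeff_apply_le (k : ι) : ‖diagCoeff u v X k‖ ≤ ‖X (v k)‖ := by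
  simpa [diagCoeff_apply] using norm_inner_le_norm (𝕜 := ℂ) (u k) (X (v k))

lemma norm_diagCoeff_le : ‖diagCoeff u v X‖ ≤ ‖X‖ :=
  (pi_norm_le_iff_of_nonneg (norm_nonneg X)).2 fun k =>
    (norm_diagCoeff_apply_le u v X k).trans (by simpa using X.le_opNorm (v k))

lemma sum_sq_norm_apply_eq (f g : OrthonormalBasis ι ℂ W) :
    ∑ k, ‖X (f k)‖ ^ 2 = ∑ k, ‖X (g k)‖ ^ 2 := by
  have : FiniteDimensional ℂ W := f.toBasis.finiteDimensional_of_finite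
  have := FiniteDimensional.complete ℂ W
  have hadjoint : ∀ f : OrthonormalBasis ι ℂ W,
      ∑ k, ‖X (f k)‖ ^ 2 = ∑ j, ‖X.adjoint (g j)‖ ^ 2 := by
    intro f
    simp_rw [← g.sum_sq_norm_inner_right (X _), ← f.sum_sq_norm_inner_left (X.adjoint _),
      ContinuousLinearMap.adjoint_inner_left]
    exact Finset.sum_comm
  rw [hadjoint f, hadjoint g]

lemma sum_sq_norm_diagCoeff_le (g : OrthonormalBasis ι ℂ W) :
    ∑ k, ‖diagCoeff u v X k‖ ^ 2 ≤ ∑ k, ‖X (g k)‖ ^ 2 := by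
  rw [sum_sq_norm_apply_eq X g v]
  gcongr with k
  exact norm_diagCoeff_apply_le u v X k

lemma sum_sq_norm_diagOp_apply (g : OrthonormalBasis ι ℂ W) :
    ∑ k, ‖diagOp u v a (g k)‖ ^ 2 = ∑ k, ‖a k‖ ^ 2 := by
  simp only [sum_sq_norm_apply_eq (diagOp u v a) g v, norm_diagOp_apply_self]

section SingularValueDecomposition

variable [FiniteDimensional ℂ W]

lemma exists_orthonormalBasis_norm_smul_eq (hι : Module.finrank ℂ W = Fintype.card ι) {w : ι → W}
    (hw : Pairwise fun i j => ⟪w i, w j⟫_ℂ = 0) :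
    ∃ u : OrthonormalBasis ι ℂ W, ∀ i, w i = (‖w i‖ : ℂ) • u i := by
  have hunit : Orthonormal ℂ
      (({i | w i ≠ 0} : Set ι).domRestrict fun i => (‖w i‖⁻¹ : ℂ) • w i) := by
    refine ⟨fun ⟨i, hi⟩ => norm_smul_inv_norm hi, fun i j hij => ?_⟩
    simp [inner_smul_left, inner_smul_right, hw (Subtype.coe_injective.ne hij)]
  obtain ⟨u, hu⟩ := hunit.exists_orthonormalBasis_extension_of_card_eq hι
  refine ⟨u, fun i => ?_⟩
  rcases eq_or_ne (w i) 0 with h | h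
  · simp [h]
  · rw [hu i h, smul_inv_smul₀]
    exact_mod_cast norm_ne_zero_iff.2 h

lemma exists_eq_diagOp_singularValues (T : W →L[ℂ] W) :
    ∃ u v : OrthonormalBasis (Fin (Module.finrank ℂ W)) ℂ W,
      T = diagOp u v fun i => (T.toLinearMap.singularValues i : ℂ) := by
  set A := T.toLinearMap
  set v := A.isSymmetric_adjoint_comp_self.eigenvectorBasis rfl
  have hinner : ∀ i j, ⟪T (v i), T (v j)⟫_ℂ =
      if i = j then (A.singularValues i ^ 2 : ℂ) else 0 := by
    intro i j
    have heigen := A.isSymmetric_adjoint_comp_self.apply_eigenvectorBasis rfl i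
    rw [← A.sq_singularValues_fin rfl i] at heigen
    calc ⟪T (v i), T (v j)⟫_ℂ = ⟪(A.adjoint ∘ₗ A) (v i), v j⟫_ℂ :=
          (A.adjoint_inner_left (v j) (A (v i))).symm
      _ = _ := by
          rw [heigen, inner_smul_left, v.inner_eq_ite]
          simp
  have hnorm : ∀ i, ‖T (v i)‖ = A.singularValues i := fun i => by
    have := hinner i i
    rw [if_pos rfl, inner_self_eq_norm_sq_to_K] at this
    exact (sq_eq_sq₀ (norm_nonneg _) (A.singularValues_nonneg i)).1 (Complex.ofReal_injective
      (by simpa using this))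
  obtain ⟨u, hu⟩ := exists_orthonormalBasis_norm_smul_eq (w := fun i => T (v i)) (by simp)
    fun i j hij => (hinner i j).trans (if_neg hij)
  exact ⟨u, v, eq_diagOp_of_forall_apply_eq u v fun i => by rw [← hnorm, ← hu]⟩

end SingularValueDecomposition

end FiniteDimensional

section SingularValues

variable {W : Type} [NormedAddCommGroup W] [InnerProductSpace ℂ W] {n : ℕ}
  (u v : OrthonormalBasis (Fin n) ℂ W) {σ : Fin n → ℝ}

lemma rank_range_diagOp_le {a : Fin n → ℂ} {i : Fin n} (ha : ∀ j, i ≤ j → a j = 0) :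
    Module.rank ℂ (LinearMap.range (diagOp u v a).toLinearMap) ≤ (i : ℕ) := by
  classical
  have hrange : LinearMap.range (diagOp u v a).toLinearMap ≤
      Submodule.span ℂ ((Finset.Iio i).image u : Finset W) := by
    rintro _ ⟨x, rfl⟩
    rw [ContinuousLinearMap.coe_coe, diagOp_apply]
    refine Submodule.sum_mem _ fun j _ => ?_
    rcases lt_or_ge j i with h | h
    · exact Submodule.smul_mem _ _ (Submodule.subset_span (by simpa using ⟨j, h, rfl⟩))
    · simp [ha j h]
  calc Module.rank ℂ (LinearMap.range (diagOp u v a).toLinearMap)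
      ≤ ((Finset.Iio i).image u).card :=
        (Submodule.rank_mono hrange).trans (rank_span_finset_le _)
    _ ≤ (i : ℕ) := Nat.cast_le.2 (Finset.card_image_le.trans (Fin.card_Iio i).le)

lemma sValue_diagOp_le (hσ₀ : ∀ i, 0 ≤ σ i) (hσ : Antitone σ) (i : Fin n) :
    sValue (diagOp u v fun i => (σ i : ℂ)) i ≤ σ i := by
  let a : Fin n → ℂ := fun j => if j < i then (σ j : ℂ) else 0
  refine (sValue_le_norm_sub _ (diagOp u v a)
    (rank_range_diagOp_le u v fun j hj => if_neg hj.not_gt)).trans ?_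
  rw [← map_sub]
  refine (norm_diagOp_le u v _).trans ((pi_norm_le_iff_of_nonneg (hσ₀ i)).2 fun j => ?_)
  rcases lt_or_ge j i with h | h
  · simpa [a, h] using hσ₀ i
  · simpa [a, h.not_gt, abs_of_nonneg (hσ₀ j)] using hσ h

lemma exists_ne_zero_apply_eq_zero_inner_eq_zero {i : Fin n} {F : W →L[ℂ] W}
    (hF : Module.rank ℂ (LinearMap.range F.toLinearMap) ≤ (i : ℕ)) :
    ∃ x ≠ 0, F x = 0 ∧ ∀ j, i < j → ⟪v j, x⟫_ℂ = 0 := by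
  have : FiniteDimensional ℂ W := v.toBasis.finiteDimensional_of_finite
  let G : W →ₗ[ℂ] LinearMap.range F.toLinearMap × (Finset.Ioi i → ℂ) :=
    F.toLinearMap.rangeRestrict.prod (LinearMap.pi fun j => (innerSL ℂ (v j)).toLinearMap)
  have hlt : Module.finrank ℂ (LinearMap.range F.toLinearMap × (Finset.Ioi i → ℂ)) <
      Module.finrank ℂ W := by
    have hrange : Module.finrank ℂ (LinearMap.range F.toLinearMap) ≤ i :=
      Module.finrank_le_of_rank_le hF
    rw [Module.finrank_prod, Module.finrank_fintype_fun_eq_card, Fintype.card_coe, Fin.card_Ioi,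
      Module.finrank_eq_card_basis v.toBasis, Fintype.card_fin]
    omega
  obtain ⟨x, hx, hx₀⟩ :=
    (Submodule.ne_bot_iff _).1 (LinearMap.ker_ne_bot_of_finrank_lt (f := G) hlt)
  have hGx : G x = 0 := hx
  exact ⟨x, hx₀, congrArg Subtype.val (congrArg Prod.fst hGx),
    fun j hj => congrFun (congrArg Prod.snd hGx) ⟨j, Finset.mem_Ioi.2 hj⟩⟩

lemma le_sValue_diagOp (hσ₀ : ∀ i, 0 ≤ σ i) (hσ : Antitone σ) (i : Fin n) :
    σ i ≤ sValue (diagOp u v fun i => (σ i : ℂ)) i := by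
  refine le_sValue fun F hF => ?_
  obtain ⟨x, hx₀, hFx, hvx⟩ := exists_ne_zero_apply_eq_zero_inner_eq_zero v hF
  set D := diagOp u v fun i => (σ i : ℂ) with hD
  have hsq : (σ i * ‖x‖) ^ 2 ≤ ‖D x‖ ^ 2 := by
    rw [hD, norm_sq_diagOp_apply, mul_pow, ← v.sum_sq_norm_inner_right x, Finset.mul_sum]
    refine Finset.sum_le_sum fun j _ => ?_
    rcases lt_or_ge i j with h | h
    · simp [hvx j h]
    · have := hσ h
      have := hσ₀ i
      rw [Complex.norm_real, Real.norm_of_nonneg (hσ₀ j)]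
      gcongr
  refine le_of_mul_le_mul_right ?_ (norm_pos_iff.2 hx₀)
  calc σ i * ‖x‖ ≤ ‖D x‖ := le_of_sq_le_sq hsq (norm_nonneg _)
    _ = ‖(D - F) x‖ := by rw [sub_apply, hFx, sub_zero]
    _ ≤ ‖D - F‖ * ‖x‖ := (D - F).le_opNorm x

variable [FiniteDimensional ℂ W]

lemma exists_eq_diagOp_sValue (T : W →L[ℂ] W) :
    ∃ u v : OrthonormalBasis (Fin (Module.finrank ℂ W)) ℂ W,
      T = diagOp u v fun i => (sValue T i : ℂ) := by
  obtain ⟨u, v, hT⟩ := exists_eq_diagOp_singularValues T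
  set σ : Fin (Module.finrank ℂ W) → ℝ := fun i => T.toLinearMap.singularValues i
  have hσ₀ : ∀ i, 0 ≤ σ i := fun i => T.toLinearMap.singularValues_nonneg i
  have hσ : Antitone σ := fun i j hij => T.toLinearMap.singularValues_antitone hij
  have hsValue : ∀ i : Fin (Module.finrank ℂ W), sValue T i = σ i := fun i => by
    rw [hT]
    exact le_antisymm (sValue_diagOp_le u v hσ₀ hσ i) (le_sValue_diagOp u v hσ₀ hσ i)
  exact ⟨u, v, by simpa only [hsValue] using hT⟩

lemma hasSum_sValue_rpow (T : W →L[ℂ] W) {p : ℝ} (hp : p ≠ 0) :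
    HasSum (fun k => sValue T k ^ p) (∑ i : Fin (Module.finrank ℂ W), sValue T i ^ p) := by
  rw [← Finset.sum_range fun k => sValue T k ^ p]
  refine hasSum_sum_of_ne_finset_zero fun k hk => ?_
  have hrank : Module.rank ℂ (LinearMap.range T.toLinearMap) ≤ (k : Cardinal) :=
    (Submodule.rank_le _).trans <| by
      rw [← Module.finrank_eq_rank]
      exact_mod_cast not_lt.1 (Finset.mem_range.not.1 hk)
  rw [sValue_eq_zero_of_rank_range_le hrank, Real.zero_rpow hp]

lemma schattenNorm_eq_finLpNorm (T : W →L[ℂ] W) {p : ℝ} (hp : p ≠ 0) :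
    schattenNorm p T =
      finLpNorm p fun i : Fin (Module.finrank ℂ W) => (sValue T i : ℂ) := by
  simp only [schattenNorm, finLpNorm, (hasSum_sValue_rpow T hp).tsum_eq, Complex.norm_real,
    Real.norm_of_nonneg (sValue_nonneg T _)]

end SingularValues

section ClarksonMap

variable {W : Type*} [NormedAddCommGroup W] [InnerProductSpace ℂ W] {ι : Type*} [Fintype ι]

/-- The map `(a, b) ↦ (A + B, A - B)` on operators `A`, `B` that are diagonal in the bases `u j`,
`v j` with coefficients `a`, `b`, read off on the diagonals in the bases `e j`, `f j`. -/
noncomputable def clarksonMap (u v e f : Fin 2 → OrthonormalBasis ι ℂ W) :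
    (Fin 2 → ι → ℂ) →ₗ[ℂ] ι ⊕ ι → ℂ :=
  let A := diagOp (u 0) (v 0) ∘ₗ LinearMap.proj 0
  let B := diagOp (u 1) (v 1) ∘ₗ LinearMap.proj 1
  (LinearEquiv.sumArrowLequivProdArrow ι ι ℂ ℂ).symm.toLinearMap ∘ₗ
    (diagCoeff (e 0) (f 0) ∘ₗ (A + B)).prod (diagCoeff (e 1) (f 1) ∘ₗ (A - B))

variable (u v e f : Fin 2 → OrthonormalBasis ι ℂ W) (a : Fin 2 → ι → ℂ)

lemma clarksonMap_apply :
    clarksonMap u v e f a = Sum.elim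
      (diagCoeff (e 0) (f 0) (diagOp (u 0) (v 0) (a 0) + diagOp (u 1) (v 1) (a 1)))
      (diagCoeff (e 1) (f 1) (diagOp (u 0) (v 0) (a 0) - diagOp (u 1) (v 1) (a 1))) :=
  rfl

lemma norm_clarksonMap_le : ‖clarksonMap u v e f a‖ ≤ ∑ j, ‖a j‖ := by
  have hsum : ‖diagOp (u 0) (v 0) (a 0)‖ + ‖diagOp (u 1) (v 1) (a 1)‖ ≤ ∑ j, ‖a j‖ := by
    rw [Fin.sum_univ_two]
    exact add_le_add (norm_diagOp_le _ _ _) (norm_diagOp_le _ _ _)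
  rw [clarksonMap_apply, pi_norm_le_iff_of_nonneg (by positivity)]
  rintro (k | k)
  · exact (norm_le_pi_norm _ k).trans
      ((norm_diagCoeff_le _ _ _).trans ((norm_add_le _ _).trans hsum))
  · exact (norm_le_pi_norm _ k).trans
      ((norm_diagCoeff_le _ _ _).trans ((norm_sub_le _ _).trans hsum))

lemma sum_sq_norm_clarksonMap_le :
    ∑ k, ‖clarksonMap u v e f a k‖ ^ 2 ≤ 2 * ∑ j, ∑ i, ‖a j i‖ ^ 2 := by
  set A := diagOp (u 0) (v 0) (a 0) with hA
  set B := diagOp (u 1) (v 1) (a 1) with hB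
  calc ∑ k, ‖clarksonMap u v e f a k‖ ^ 2
      = ∑ k, ‖diagCoeff (e 0) (f 0) (A + B) k‖ ^ 2 +
          ∑ k, ‖diagCoeff (e 1) (f 1) (A - B) k‖ ^ 2 := by
        simp only [clarksonMap_apply, Fintype.sum_sum_type, Sum.elim_inl, Sum.elim_inr, A, B]
    _ ≤ ∑ k, ‖(A + B) (v 0 k)‖ ^ 2 + ∑ k, ‖(A - B) (v 0 k)‖ ^ 2 :=
        add_le_add (sum_sq_norm_diagCoeff_le _ _ _ _) (sum_sq_norm_diagCoeff_le _ _ _ _)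
    _ = 2 * (∑ k, ‖A (v 0 k)‖ ^ 2 + ∑ k, ‖B (v 0 k)‖ ^ 2) := by
        simp only [← Finset.sum_add_distrib, Finset.mul_sum, add_apply, sub_apply]
        refine Finset.sum_congr rfl fun k _ => ?_
        simpa only [← sq] using parallelogram_law_with_norm ℂ (A (v 0 k)) (B (v 0 k))
    _ = 2 * ∑ j, ∑ i, ‖a j i‖ ^ 2 := by
        rw [Fin.sum_univ_two, hA, hB, sum_sq_norm_diagOp_apply, sum_sq_norm_diagOp_apply]

lemma finLpNorm_sumElim {p : ℝ} (hp : p ≠ 0) (b c : ι → ℂ) :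
    finLpNorm p (Sum.elim b c) = (finLpNorm p b ^ p + finLpNorm p c ^ p) ^ (1 / p) := by
  rw [finLpNorm_rpow b hp, finLpNorm_rpow c hp, finLpNorm]
  simp only [Fintype.sum_sum_type, Sum.elim_inl, Sum.elim_inr]

end ClarksonMap

theorem schattenNorm_clarkson_of_finiteDimensional {W : Type} [NormedAddCommGroup W]
    [InnerProductSpace ℂ W] [FiniteDimensional ℂ W] {p q : ℝ} (hp : 2 ≤ p)
    (hpq : p.HolderConjugate q) (A B : W →L[ℂ] W) :
    (schattenNorm p (A + B) ^ p + schattenNorm p (A - B) ^ p) ^ (1 / p) ≤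
      2 ^ (1 / p) * (schattenNorm p A ^ q + schattenNorm p B ^ q) ^ (1 / q) := by
  let s (T : W →L[ℂ] W) (i : Fin (Module.finrank ℂ W)) : ℂ := sValue T i
  have hs : ∀ T, schattenNorm p T = finLpNorm p (s T) := fun T =>
    schattenNorm_eq_finLpNorm T hpq.ne_zero
  obtain ⟨u₀, v₀, hA⟩ := exists_eq_diagOp_sValue A
  obtain ⟨u₁, v₁, hB⟩ := exists_eq_diagOp_sValue B
  obtain ⟨e₀, f₀, hadd⟩ := exists_eq_diagOp_sValue (A + B)
  obtain ⟨e₁, f₁, hsub⟩ := exists_eq_diagOp_sValue (A - B)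
  set L := clarksonMap ![u₀, u₁] ![v₀, v₁] ![e₀, e₁] ![f₀, f₁]
  have hL : L ![s A, s B] = Sum.elim (s (A + B)) (s (A - B)) := by
    simp only [L, s, clarksonMap_apply, Matrix.cons_val_zero, Matrix.cons_val_one, ← hA, ← hB]
    congr 1
    · exact (congrArg _ hadd).trans (diagCoeff_diagOp e₀ f₀ _)
    · exact (congrArg _ hsub).trans (diagCoeff_diagOp e₁ f₁ _)
  have hmain := finLpNorm_le_of_interpolation L zero_le_one (Real.sqrt_nonneg 2)
    (fun a => by simpa using norm_clarksonMap_le _ _ _ _ a)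
    (fun a => by simpa using sum_sq_norm_clarksonMap_le _ _ _ _ a) hp hpq ![s A, s B]
  have hconst : √2 ^ (2 / p) = (2 : ℝ) ^ (1 / p) := by
    rw [Real.sqrt_eq_rpow, ← Real.rpow_mul zero_le_two]
    congr 1
    ring
  rw [hL, finLpNorm_sumElim hpq.ne_zero, Real.one_rpow, one_mul, hconst] at hmain
  simpa [finLpNorm.eq_1 q, hs, abs_of_nonneg (finLpNorm_nonneg _)] using hmain

section Compression

variable {E : Type} [NormedAddCommGroup E] [InnerProductSpace ℂ E] (W : Submodule ℂ E)
  [W.HasOrthogonalProjection] (S T : E →L[ℂ] E)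

/-- The compression `P_W T|_W` of an operator `T` to a subspace `W`. -/
noncomputable def compression : W →L[ℂ] W :=
  W.orthogonalProjectionOnto ∘L T ∘L W.subtypeL

lemma compression_add : compression W (S + T) = compression W S + compression W T := by
  ext
  simp [compression]

lemma compression_sub : compression W (S - T) = compression W S - compression W T := by
  ext
  simp [compression]

lemma sValue_compression_le (n : ℕ) : sValue (compression W T) n ≤ sValue T n :=
  (sValue_comp_comp_le _ T _ n).trans <| mul_le_of_le_one_left (sValue_nonneg T n) <|
    mul_le_one₀ W.orthogonalProjectionOnto_norm_le (norm_nonneg _) W.norm_subtypeL_le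

lemma sValue_starProjection_comp_comp_le (n : ℕ) :
    sValue (W.starProjection ∘L T ∘L W.starProjection) n ≤ sValue (compression W T) n :=
  (sValue_comp_comp_le W.subtypeL (compression W T) W.orthogonalProjectionOnto n).trans <|
    mul_le_of_le_one_left (sValue_nonneg _ n) <|
      mul_le_one₀ W.norm_subtypeL_le (norm_nonneg _) W.orthogonalProjectionOnto_norm_le

end Compression

section FiniteSections

variable {E : Type} [NormedAddCommGroup E] [InnerProductSpace ℂ E]

lemma eventually_le_span_finset (V : Submodule ℂ E) [FiniteDimensional ℂ V] :
    ∀ᶠ s : Finset E in atTop, V ≤ Submodule.span ℂ s := by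
  obtain ⟨t, ht⟩ := Module.Finite.iff_fg.1 ‹_›
  filter_upwards [eventually_ge_atTop t] with s hs
  exact ht ▸ Submodule.span_mono (Finset.coe_subset.2 hs)

lemma starProjection_comp_comp_eq_self {F : E →L[ℂ] E} {W : Submodule ℂ E}
    [W.HasOrthogonalProjection] [(LinearMap.ker F.toLinearMap).HasOrthogonalProjection]
    (hrange : LinearMap.range F.toLinearMap ≤ W) (hker : (LinearMap.ker F.toLinearMap)ᗮ ≤ W) :
    W.starProjection ∘L F ∘L W.starProjection = F := by
  ext x
  have hx : F (W.starProjection x) = F x := by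
    have hmem : x - W.starProjection x ∈ LinearMap.ker F.toLinearMap := by
      rw [← Submodule.orthogonal_orthogonal (LinearMap.ker F.toLinearMap)]
      exact Submodule.orthogonal_le hker (W.sub_starProjection_mem_orthogonal x)
    rw [LinearMap.mem_ker, map_sub, sub_eq_zero] at hmem
    exact hmem.symm
  rw [ContinuousLinearMap.comp_apply, ContinuousLinearMap.comp_apply, hx,
    Submodule.starProjection_eq_self_iff]
  exact hrange (LinearMap.mem_range_self F.toLinearMap x)

/-- The finite section `P T P` of an operator `T`, where `P` is the orthogonal projection onto the
span of the finite set `s`. -/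
noncomputable def finiteSection (s : Finset E) (T : E →L[ℂ] E) : E →L[ℂ] E :=
  (Submodule.span ℂ (s : Set E)).starProjection ∘L T ∘L
    (Submodule.span ℂ (s : Set E)).starProjection

lemma finiteSection_add (s : Finset E) (S T : E →L[ℂ] E) :
    finiteSection s (S + T) = finiteSection s S + finiteSection s T := by
  rw [finiteSection, ContinuousLinearMap.add_comp, ContinuousLinearMap.comp_add, finiteSection,
    finiteSection]

lemma finiteSection_sub (s : Finset E) (S T : E →L[ℂ] E) :
    finiteSection s (S - T) = finiteSection s S - finiteSection s T := by
  rw [finiteSection, ContinuousLinearMap.sub_comp, ContinuousLinearMap.comp_sub, finiteSection,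
    finiteSection]

lemma norm_finiteSection_le (s : Finset E) (T : E →L[ℂ] E) : ‖finiteSection s T‖ ≤ ‖T‖ := by
  set P := (Submodule.span ℂ (s : Set E)).starProjection
  have hP₁ : ‖P‖ ≤ 1 := Submodule.starProjection_norm_le _
  calc ‖finiteSection s T‖ ≤ ‖P‖ * (‖T‖ * ‖P‖) :=
        (P.opNorm_comp_le _).trans (by gcongr; exact T.opNorm_comp_le P)
    _ ≤ 1 * (‖T‖ * 1) := by gcongr
    _ = ‖T‖ := by ring

lemma tendsto_sValue_compression_span {T : E →L[ℂ] E}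
    (hT : Tendsto (fun s => finiteSection s T) atTop (𝓝 T)) (n : ℕ) :
    Tendsto (fun s : Finset E => sValue (compression (Submodule.span ℂ s) T) n) atTop
      (𝓝 (sValue T n)) :=
  tendsto_of_tendsto_of_tendsto_of_le_of_le
    (((lipschitzWith_sValue n).continuous.tendsto T).comp hT) tendsto_const_nhds
    (fun _ => sValue_starProjection_comp_comp_le _ T n) fun _ => sValue_compression_le _ T n

variable [CompleteSpace E]

lemma eventually_finiteSection_eq (F : E →L[ℂ] E)
    [FiniteDimensional ℂ (LinearMap.range F.toLinearMap)] :
    ∀ᶠ s : Finset E in atTop, finiteSection s F = F := by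
  have : CompleteSpace (LinearMap.ker F.toLinearMap) := F.isClosed_ker.completeSpace_coe
  have : FiniteDimensional ℂ (LinearMap.ker F.toLinearMap)ᗮ :=
    (F.toLinearMap.quotKerEquivRange.symm.trans
      (Submodule.quotientEquivOrthogonal _).toLinearEquiv).finiteDimensional
  filter_upwards [eventually_le_span_finset (LinearMap.range F.toLinearMap),
    eventually_le_span_finset (LinearMap.ker F.toLinearMap)ᗮ] with s hrange hker
  exact starProjection_comp_comp_eq_self hrange hker

lemma tendsto_finiteSection {T : E →L[ℂ] E} (hT : Tendsto (sValue T) atTop (𝓝 0)) :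
    Tendsto (fun s => finiteSection s T) atTop (𝓝 T) := by
  refine Metric.tendsto_nhds.2 fun ε hε => ?_
  obtain ⟨n, hn⟩ := (hT.eventually_lt_const (half_pos hε)).exists
  obtain ⟨F, hF, hTF⟩ := exists_norm_sub_lt_of_sValue_lt hn
  have : FiniteDimensional ℂ (LinearMap.range F.toLinearMap) :=
    Module.rank_lt_aleph0_iff.1 (hF.trans_lt Cardinal.natCast_lt_aleph0)
  filter_upwards [eventually_finiteSection_eq F] with s hs
  calc dist (finiteSection s T) T = ‖finiteSection s (T - F) - (T - F)‖ := by
        rw [dist_eq_norm, finiteSection_sub, hs, sub_sub_sub_cancel_right]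
    _ ≤ ‖T - F‖ + ‖T - F‖ := (norm_sub_le _ _).trans (by gcongr; exact norm_finiteSection_le s _)
    _ < ε := by linarith

end FiniteSections

lemma tsum_add_tsum_le_of_sum_range_le {f g : ℕ → ℝ} {C : ℝ} (hf : ∀ n, 0 ≤ f n)
    (hg : ∀ n, 0 ≤ g n)
    (h : ∀ N, ∑ n ∈ Finset.range N, f n + ∑ n ∈ Finset.range N, g n ≤ C) :
    ∑' n, f n + ∑' n, g n ≤ C := by
  have hfs : Summable f := summable_of_sum_range_le hf fun N =>
    (le_add_of_nonneg_right (Finset.sum_nonneg fun n _ => hg n)).trans (h N)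
  have hgs : Summable g := summable_of_sum_range_le hg fun N =>
    (le_add_of_nonneg_left (Finset.sum_nonneg fun n _ => hf n)).trans (h N)
  exact le_of_tendsto' (hfs.hasSum.tendsto_sum_nat.add hgs.hasSum.tendsto_sum_nat) h

section SchattenNorm

variable {E : Type} [NormedAddCommGroup E] [InnerProductSpace ℂ E] {S T : E →L[ℂ] E} {p : ℝ}

lemma schattenNorm_nonneg (p : ℝ) (T : E →L[ℂ] E) : 0 ≤ schattenNorm p T :=
  Real.rpow_nonneg (tsum_nonneg fun n => sValue_rpow_nonneg T n p) _

lemma schattenNorm_rpow_add_rpow_nonneg (p r : ℝ) (S T : E →L[ℂ] E) :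
    0 ≤ schattenNorm p S ^ r + schattenNorm p T ^ r :=
  add_nonneg (Real.rpow_nonneg (schattenNorm_nonneg p S) r)
    (Real.rpow_nonneg (schattenNorm_nonneg p T) r)

lemma schattenNorm_rpow (hp : p ≠ 0) (T : E →L[ℂ] E) :
    schattenNorm p T ^ p = ∑' n, sValue T n ^ p := by
  rw [schattenNorm, ← Real.rpow_mul (tsum_nonneg fun n => sValue_rpow_nonneg T n p),
    one_div_mul_cancel hp, Real.rpow_one]

lemma tendsto_sValue_of_summable_rpow (hp : 0 < p) (hT : Summable fun n => sValue T n ^ p) :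
    Tendsto (sValue T) atTop (𝓝 0) := by
  have h := hT.tendsto_atTop_zero.rpow_const (p := p⁻¹) (.inr (by positivity))
  rw [Real.zero_rpow (by positivity)] at h
  exact h.congr fun n => Real.rpow_rpow_inv (sValue_nonneg T n) hp.ne'

variable (W : Submodule ℂ E) [FiniteDimensional ℂ W]

lemma schattenNorm_compression_le (hp : 0 < p) (hT : Summable fun n => sValue T n ^ p) :
    schattenNorm p (compression W T) ≤ schattenNorm p T := by
  refine Real.rpow_le_rpow (tsum_nonneg fun n => sValue_rpow_nonneg _ n p) ?_
    (by positivity)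
  exact (hasSum_sValue_rpow _ hp.ne').summable.tsum_le_tsum
    (fun n => Real.rpow_le_rpow (sValue_nonneg _ _) (sValue_compression_le W T n) hp.le) hT

lemma schattenNorm_compression_clarkson {q : ℝ} (hp : 2 ≤ p) (hpq : p.HolderConjugate q)
    (hS : Summable fun n => sValue S n ^ p) (hT : Summable fun n => sValue T n ^ p) :
    (schattenNorm p (compression W (S + T)) ^ p +
        schattenNorm p (compression W (S - T)) ^ p) ^ (1 / p) ≤
      2 ^ (1 / p) * (schattenNorm p S ^ q + schattenNorm p T ^ q) ^ (1 / q) := by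
  rw [compression_add, compression_sub]
  refine (schattenNorm_clarkson_of_finiteDimensional hp hpq _ _).trans ?_
  have hS₀ := schattenNorm_nonneg p (compression W S)
  have hT₀ := schattenNorm_nonneg p (compression W T)
  have hq : 0 < q := hpq.symm.pos
  gcongr
  · exact schattenNorm_compression_le W hpq.pos hS
  · exact schattenNorm_compression_le W hpq.pos hT

lemma schattenNorm_rpow_add_rpow_le_of_compression {C : ℝ} (hp : 0 < p)
    (hS : Tendsto (fun s => finiteSection s S) atTop (𝓝 S))
    (hT : Tendsto (fun s => finiteSection s T) atTop (𝓝 T))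
    (h : ∀ s : Finset E, schattenNorm p (compression (Submodule.span ℂ s) S) ^ p +
      schattenNorm p (compression (Submodule.span ℂ s) T) ^ p ≤ C) :
    schattenNorm p S ^ p + schattenNorm p T ^ p ≤ C := by
  have hlim : ∀ (T : E →L[ℂ] E), Tendsto (fun s => finiteSection s T) atTop (𝓝 T) → ∀ N, Tendsto
      (fun s : Finset E => ∑ n ∈ Finset.range N, sValue (compression (Submodule.span ℂ s) T) n ^ p)
      atTop (𝓝 (∑ n ∈ Finset.range N, sValue T n ^ p)) := fun T hT N =>
    tendsto_finsetSum _ fun n _ => (tendsto_sValue_compression_span hT n).rpow_const (.inr hp.le)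
  rw [schattenNorm_rpow hp.ne', schattenNorm_rpow hp.ne']
  refine tsum_add_tsum_le_of_sum_range_le (sValue_rpow_nonneg S · p) (sValue_rpow_nonneg T · p)
    fun N => le_of_tendsto' ((hlim S hS N).add (hlim T hT N)) fun s => le_trans ?_ (h s)
  rw [schattenNorm_rpow hp.ne', schattenNorm_rpow hp.ne']
  exact add_le_add
    ((hasSum_sValue_rpow _ hp.ne').summable.sum_le_tsum _ fun n _ => sValue_rpow_nonneg _ n p)
    ((hasSum_sValue_rpow _ hp.ne').summable.sum_le_tsum _ fun n _ => sValue_rpow_nonneg _ n p)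

end SchattenNorm

theorem stmt12_general {H : Type} [NormedAddCommGroup H] [InnerProductSpace ℂ H] [CompleteSpace H]
    {p q : ℝ} (hp : 2 ≤ p) (hpq : p.HolderConjugate q) {T₁ T₂ : H →L[ℂ] H}
    (hT₁ : Summable fun n => sValue T₁ n ^ p) (hT₂ : Summable fun n => sValue T₂ n ^ p) :
    (schattenNorm p (T₁ + T₂) ^ p + schattenNorm p (T₁ - T₂) ^ p) ^ (1 / p) ≤
      2 ^ (1 / p) * (schattenNorm p T₁ ^ q + schattenNorm p T₂ ^ q) ^ (1 / q) := by
  have hlim₁ := tendsto_finiteSection (tendsto_sValue_of_summable_rpow hpq.pos hT₁)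
  have hlim₂ := tendsto_finiteSection (tendsto_sValue_of_summable_rpow hpq.pos hT₂)
  have hrhs : 0 ≤ 2 ^ p⁻¹ * (schattenNorm p T₁ ^ q + schattenNorm p T₂ ^ q) ^ q⁻¹ :=
    mul_nonneg (by positivity) (Real.rpow_nonneg (schattenNorm_rpow_add_rpow_nonneg p q T₁ T₂) _)
  have hroot {x : ℝ} (hx : 0 ≤ x) := Real.rpow_inv_le_iff_of_pos hx hrhs hpq.pos
  simp only [one_div]
  rw [hroot (schattenNorm_rpow_add_rpow_nonneg p p _ _)]
  refine schattenNorm_rpow_add_rpow_le_of_compression hpq.pos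
    (by simpa only [finiteSection_add] using hlim₁.add hlim₂)
    (by simpa only [finiteSection_sub] using hlim₁.sub hlim₂) fun s => ?_
  rw [← hroot (schattenNorm_rpow_add_rpow_nonneg p p _ _)]
  simpa only [one_div] using schattenNorm_compression_clarkson _ hp hpq hT₁ hT₂

/-- Clarkson inequality for Schatten classes, case `2 ≤ p < ∞`:
`(‖T₁+T₂‖_p^p + ‖T₁−T₂‖_p^p)^(1/p) ≤ 2^(1/p) (‖T₁‖_p^q + ‖T₂‖_p^q)^(1/q)`. -/
theorem stmt12 {H : Type} [NormedAddCommGroup H] [InnerProductSpace ℂ H]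
    [CompleteSpace H] [TopologicalSpace.SeparableSpace H]
    (p q : ℝ) (hp : 2 ≤ p) (hq : q = p / (p - 1))
    (T₁ T₂ : H →L[ℂ] H) (hT₁ : MemSp p T₁) (hT₂ : MemSp p T₂) :
    (schattenNorm p (T₁ + T₂) ^ p + schattenNorm p (T₁ - T₂) ^ p) ^ (1 / p) ≤
      (2 : ℝ) ^ (1 / p) * (schattenNorm p T₁ ^ q + schattenNorm p T₂ ^ q) ^ (1 / q) :=
  stmt12_general hp (hq ▸ .conjExponent (by linarith)) hT₁.2 hT₂.2
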